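/- arXiv:2111.15497 — 2 statements merged into one kernel-verified Lean document; each statement's English description precedes it below -/
import Mathlib

section
/- Let Λ : ℝ → ℝ^d be C¹ and exponentially bi-asymptotically constant with decay coefficient ρ > 0, with Λ(τ) → λ⁺ as τ → +∞ and Λ(τ) → λ⁻ as τ → −∞. Then for every α with 0 < α < ρ (strict inequality), the derivative of Λ_α within [−1,1] vanishes at both endpoints: the one-sided derivatives of Λ_α at s = 1 and at s = −1 are equal to 0 ∈ ℝ^d. -/
open Filter Topology

/-- The time compactification map `g_α(τ) = tanh(ατ/2)`. -/
noncomputable def gcomp (α τ : ℝ) : ℝ := Real.tanh (α * τ / 2)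

/-- Its inverse `h_α(s) = (1/α)·ln((1+s)/(1-s))`. -/
noncomputable def hcomp (α s : ℝ) : ℝ := (1 / α) * Real.log ((1 + s) / (1 - s))

/-- `Λ : ℝ → ℝ^d` is exponentially bi-asymptotically constant with decay coefficient `ρ`:
both limits `lim_{τ→+∞} Λ'(τ)·e^{ρτ}` and `lim_{τ→-∞} Λ'(τ)·e^{-ρτ}` exist. -/
def ExpBiAsympConst {d : ℕ} (Λ : ℝ → Fin d → ℝ) (ρ : ℝ) : Prop :=
  (∃ Lp : Fin d → ℝ, Tendsto (fun τ => Real.exp (ρ * τ) • deriv Λ τ) atTop (𝓝 Lp)) ∧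
  (∃ Lm : Fin d → ℝ, Tendsto (fun τ => Real.exp (-ρ * τ) • deriv Λ τ) atBot (𝓝 Lm))

/-- The compactified input `Λ_α : [-1,1] → ℝ^d`, equal to `Λ ∘ h_α` on `(-1,1)` and to the
future/past limits `lp`, `lm` at `s = 1`, `s = -1` respectively. -/
noncomputable def compInput {d : ℕ} (Λ : ℝ → Fin d → ℝ) (lp lm : Fin d → ℝ)
    (α s : ℝ) : Fin d → ℝ :=
  if s = 1 then lp else if s = -1 then lm else Λ (hcomp α s)

lemma hcomp_hasDerivAt {α s : ℝ} (hα : 0 < α) (h1 : -1 < s) (h2 : s < 1) :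
    HasDerivAt (hcomp α) (2 / (α * ((1 + s) * (1 - s)))) s := by
  have a : (1 - s) ≠ 0 := by linarith
  have b : (1 + s) ≠ 0 := by linarith
  have e1 : HasDerivAt (fun x : ℝ => (1 + x) / (1 - x))
      ((1 * (1 - s) - (1 + s) * (-1)) / (1 - s) ^ 2) s :=
    ((hasDerivAt_id s).const_add 1).div ((hasDerivAt_id s).const_sub 1) a
  have e2 := (e1.log (div_ne_zero b a)).const_mul (1 / α)
  have e3 : HasDerivAt (hcomp α) _ s := e2
  convert e3 using 1
  field_simp
  ring

lemma exp_hcomp {α s : ℝ} (hα : 0 < α) (h1 : -1 < s) (h2 : s < 1) :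
    Real.exp (α * hcomp α s) = (1 + s) / (1 - s) := by
  have : α * hcomp α s = Real.log ((1 + s) / (1 - s)) := by
    unfold hcomp; field_simp
  rw [this, Real.exp_log]
  apply div_pos <;> linarith

lemma hcomp_tendsto_one {α : ℝ} (hα : 0 < α) : Tendsto (hcomp α) (𝓝[<] 1) atTop := by
  unfold hcomp
  apply Tendsto.const_mul_atTop (by positivity)
  apply Real.tendsto_log_atTop.comp
  have h1 : Tendsto (fun s : ℝ => 1 + s) (𝓝[<] 1) (𝓝 (1 + 1)) :=
    (Continuous.tendsto (by fun_prop) 1).mono_left nhdsWithin_le_nhds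
  have h2 : Tendsto (fun s : ℝ => (1 - s)) (𝓝[<] 1) (𝓝[>] 0) := by
    apply tendsto_nhdsWithin_of_tendsto_nhds_of_eventually_within
    · have : Tendsto (fun s : ℝ => 1 - s) (𝓝[<] 1) (𝓝 (1 - 1)) :=
        (Continuous.tendsto (by fun_prop) 1).mono_left nhdsWithin_le_nhds
      simpa using this
    · filter_upwards [self_mem_nhdsWithin] with s hs
      simpa using hs
  exact h1.pos_mul_atTop (by norm_num) (tendsto_inv_nhdsGT_zero.comp h2)

lemma hcomp_neg (α s : ℝ) : hcomp α (-s) = - hcomp α s := by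
  unfold hcomp
  rw [← mul_neg, ← Real.log_inv, inv_div]
  simp [sub_eq_add_neg]

lemma right_end {d : ℕ} (Λ : ℝ → Fin d → ℝ) (ρ : ℝ)
    (hΛ : Differentiable ℝ Λ) (lp lm Lp : Fin d → ℝ)
    (hL : Tendsto (fun τ => Real.exp (ρ * τ) • deriv Λ τ) atTop (𝓝 Lp))
    (hp : Tendsto Λ atTop (𝓝 lp)) (α : ℝ) (hα : 0 < α) (hαρ : α < ρ) :
    HasDerivWithinAt (compInput Λ lp lm α) 0 (Set.Iic 1) 1 := by
  have hev : ∀ s ∈ Set.Ioo (-1 : ℝ) 1, compInput Λ lp lm α s = Λ (hcomp α s) := by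
    intro s hs
    unfold compInput
    rw [if_neg hs.2.ne, if_neg hs.1.ne']
  have hmem : Set.Ioo (-1 : ℝ) 1 ∈ 𝓝[<] (1 : ℝ) := Ioo_mem_nhdsLT (by norm_num)
  have hder : ∀ s ∈ Set.Ioo (-1 : ℝ) 1, HasDerivAt (compInput Λ lp lm α)
      ((2 / (α * ((1 + s) * (1 - s)))) • deriv Λ (hcomp α s)) s := by
    intro s hs
    have := (hΛ (hcomp α s)).hasDerivAt.scomp s (hcomp_hasDerivAt hα hs.1 hs.2)
    apply this.congr_of_eventuallyEq
    filter_upwards [isOpen_Ioo.mem_nhds hs] with x hx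
    exact hev x hx
  have ht := hcomp_tendsto_one hα
  apply hasDerivWithinAt_Iic_of_tendsto_deriv (s := Set.Ioo (-1 : ℝ) 1)
  · exact fun s hs => (hder s hs).differentiableAt.differentiableWithinAt
  · have h1 : compInput Λ lp lm α 1 = lp := by simp [compInput]
    unfold ContinuousWithinAt
    rw [h1]
    have h2 : Tendsto (compInput Λ lp lm α) (𝓝[<] 1) (𝓝 lp) := by
      apply (hp.comp ht).congr'
      filter_upwards [hmem] with x hx
      exact (hev x hx).symm
    exact h2.mono_left (nhdsWithin_mono _ fun x hx => hx.2)
  · exact hmem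
  · have k1 : Tendsto (fun s : ℝ => 2 / (α * (1 + s) ^ 2)) (𝓝[<] 1)
        (𝓝 (2 / (α * (1 + 1) ^ 2))) := by
      apply Tendsto.mono_left _ nhdsWithin_le_nhds
      apply Tendsto.div tendsto_const_nhds
      · exact Continuous.tendsto (by fun_prop) 1
      · positivity
    have k2 : Tendsto (fun s : ℝ => Real.exp (-((ρ - α) * hcomp α s))) (𝓝[<] 1) (𝓝 0) :=
      Real.tendsto_exp_neg_atTop_nhds_zero.comp
        (ht.const_mul_atTop (by linarith))
    have k3 := (k1.mul k2).smul (hL.comp ht)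
    rw [mul_zero, zero_smul] at k3
    apply k3.congr'
    filter_upwards [hmem] with s hs
    rw [(hder s hs).deriv]
    simp only [Function.comp]
    rw [smul_smul]
    congr 1
    rw [mul_assoc, ← Real.exp_add]
    have : -((ρ - α) * hcomp α s) + ρ * hcomp α s = α * hcomp α s := by ring
    rw [this, exp_hcomp hα hs.1 hs.2]
    have a : (1 - s) ≠ 0 := by linarith [hs.2]
    have b : (1 + s) ≠ 0 := by linarith [hs.1]
    field_simp

/-- If `Λ` is C¹ and exponentially bi-asymptotically constant with decay
coefficient `ρ > 0` and limits `lp`, `lm`, then for every `α` with `0 < α < ρ` the one-sided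
derivatives of `Λ_α` within `[-1,1]` at the endpoints `s = 1` and `s = -1` exist and equal
`0`. -/
theorem stmt5 {d : ℕ} (Λ : ℝ → Fin d → ℝ) (ρ : ℝ) (hρ : 0 < ρ)
    (hΛ : ContDiff ℝ 1 Λ) (hbac : ExpBiAsympConst Λ ρ)
    (lp lm : Fin d → ℝ)
    (hp : Tendsto Λ atTop (𝓝 lp)) (hm : Tendsto Λ atBot (𝓝 lm)) :
    ∀ α : ℝ, 0 < α → α < ρ →
      HasDerivWithinAt (compInput Λ lp lm α) 0 (Set.Icc (-1) 1) 1 ∧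
      HasDerivWithinAt (compInput Λ lp lm α) 0 (Set.Icc (-1) 1) (-1) := by
  intro α hα hαρ
  have hd : Differentiable ℝ Λ := hΛ.differentiable (by norm_num)
  obtain ⟨⟨Lp, hLp⟩, ⟨Lm, hLm⟩⟩ := hbac
  refine ⟨(right_end Λ ρ hd lp lm Lp hLp hp α hα hαρ).mono Set.Icc_subset_Iic_self, ?_⟩
  have hL' : Tendsto (fun τ => Real.exp (ρ * τ) • deriv (fun t => Λ (-t)) τ) atTop
      (𝓝 (-Lm)) := by
    have := (hLm.comp tendsto_neg_atTop_atBot).neg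
    apply this.congr
    intro τ
    simp [deriv_comp_neg]
  have key := right_end (fun t => Λ (-t)) ρ (hd.comp differentiable_neg) lm lp (-Lm) hL'
    (hm.comp tendsto_neg_atTop_atBot) α hα hαρ
  have heq : compInput Λ lp lm α = fun s => compInput (fun t => Λ (-t)) lm lp α (-s) := by
    funext s
    unfold compInput
    rw [hcomp_neg]
    beta_reduce
    rw [neg_neg]
    by_cases h1 : s = 1
    · subst h1; norm_num
    · by_cases h2 : s = -1
      · subst h2; norm_num
      · have h3 : ¬ (-s = 1) := fun h => h2 (by linarith)
        have h4 : ¬ (-s = -1) := fun h => h1 (by linarith)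
        simp only [if_neg h1, if_neg h2, if_neg h3, if_neg h4]
  rw [heq]
  have key' : HasDerivWithinAt (compInput (fun t => Λ (-t)) lm lp α) 0 (Set.Iic 1) (-(-1)) := by
    rw [neg_neg]; exact key
  have := key'.scomp (-1 : ℝ) (h := fun s : ℝ => -s) (s := Set.Icc (-1 : ℝ) 1)
    (hasDerivAt_neg (-1 : ℝ)).hasDerivWithinAt
    (fun x hx => by simp only [Set.mem_Iic]; linarith [hx.1])
  rw [smul_zero] at this
  exact this
end

section
/- Let f : ℝⁿ × ℝ^d → ℝⁿ be C¹, and let Λ : ℝ → ℝ^d be C¹ and exponentially bi-asymptotically constant with decay coefficient ρ > 0, with limits λ^± at ±∞. Fix r > 0 and α ∈ (0, ρ]. For every x₀ ∈ ℝⁿ, the characteristic polynomial of the Fréchet derivative of F_{r,α} (within ℝⁿ × [−1,1]) at (x₀, 1), regarded as a linear endomorphism of ℝⁿ × ℝ, equals the characteristic polynomial of the linear endomorphism (1/r)·D_x f(x₀, λ⁺) of ℝⁿ multiplied by the linear factor (X + α); similarly, at (x₀, −1) it equals the characteristic polynomial of (1/r)·D_x f(x₀, λ⁻) multiplied by (X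 − α). -/
open Filter Topology

/-- The compactified vector field `F_{r,α}(x,s) = (f(x,Λ_α(s))/r, α(1-s²)/2)` on `ℝⁿ × [-1,1]`. -/
noncomputable def compField {n d : ℕ} (f : (Fin n → ℝ) × (Fin d → ℝ) → Fin n → ℝ)
    (Λ : ℝ → Fin d → ℝ) (lp lm : Fin d → ℝ) (r α : ℝ) :
    (Fin n → ℝ) × ℝ → (Fin n → ℝ) × ℝ :=
  fun p => (r⁻¹ • f (p.1, compInput Λ lp lm α p.2), α * (1 - p.2 ^ 2) / 2)

/-- The extended phase space `ℝⁿ × [-1,1]`. -/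
def compDomain (n : ℕ) : Set ((Fin n → ℝ) × ℝ) := Set.univ ×ˢ Set.Icc (-1) 1

theorem aux_tendsto_h (α : ℝ) (hα : 0 < α) : Tendsto (hcomp α) (𝓝[<] 1) atTop := by
  unfold hcomp
  apply Tendsto.const_mul_atTop (by positivity)
  apply Real.tendsto_log_atTop.comp
  have h1 : Tendsto (fun s : ℝ => 1 + s) (𝓝[<] 1) (𝓝 2) := by
    have : Tendsto (fun s : ℝ => 1 + s) (𝓝 1) (𝓝 (1 + 1)) :=
      (continuous_const.add continuous_id).tendsto _
    norm_num at this
    exact this.mono_left nhdsWithin_le_nhds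
  have h2 : Tendsto (fun s : ℝ => 1 - s) (𝓝[<] 1) (𝓝[>] 0) := by
    apply tendsto_nhdsWithin_iff.2
    constructor
    · have : Tendsto (fun s : ℝ => 1 - s) (𝓝 1) (𝓝 (1 - 1)) :=
        (continuous_const.sub continuous_id).tendsto _
      norm_num at this
      exact this.mono_left nhdsWithin_le_nhds
    · filter_upwards [self_mem_nhdsWithin] with s hs
      simpa using hs
  have h3 := h2.inv_tendsto_nhdsGT_zero
  simpa [div_eq_mul_inv] using Tendsto.pos_mul_atTop (by norm_num) h1 h3

theorem aux_input {d : ℕ} (Λ : ℝ → Fin d → ℝ) (ρ : ℝ) (hΛ : Differentiable ℝ Λ)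
    (Lp : Fin d → ℝ) (hL : Tendsto (fun τ => Real.exp (ρ * τ) • deriv Λ τ) atTop (𝓝 Lp))
    (lp lm : Fin d → ℝ) (hp : Tendsto Λ atTop (𝓝 lp)) (α : ℝ) (hα : α ∈ Set.Ioc 0 ρ) :
    ∃ v, HasDerivWithinAt (compInput Λ lp lm α) v (Set.Icc (-1) 1) 1 := by
  obtain ⟨h0, hρ⟩ := hα
  have hh := aux_tendsto_h α h0
  have hder : ∀ s ∈ Set.Ioo (-1 : ℝ) 1, HasDerivAt (compInput Λ lp lm α)
      ((2 / α / (1 + s) ^ 2 * Real.exp ((α - ρ) * hcomp α s)) •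
        (Real.exp (ρ * hcomp α s) • deriv Λ (hcomp α s))) s := by
    intro s hs
    have ha : 0 < 1 + s := by linarith [hs.1]
    have hb : 0 < 1 - s := by linarith [hs.2]
    have e1 : HasDerivAt (hcomp α) (1 / α * (((1 * (1 - s) - (1 + s) * (-1)) / (1 - s) ^ 2) /
        ((1 + s) / (1 - s)))) s := by
      unfold hcomp
      exact ((((hasDerivAt_id s).const_add 1).div ((hasDerivAt_id s).const_sub 1)
        hb.ne').log (div_pos ha hb).ne').const_mul _
    have e2 : HasDerivAt (fun s => Λ (hcomp α s)) _ s :=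
      HasDerivAt.scomp s (hΛ (hcomp α s)).hasDerivAt e1
    have e3 : compInput Λ lp lm α =ᶠ[𝓝 s] fun s => Λ (hcomp α s) := by
      filter_upwards [isOpen_Ioo.mem_nhds hs] with t ht
      simp [compInput, ht.1.ne', ht.2.ne]
    refine (e2.congr_of_eventuallyEq e3).congr_deriv (Eq.symm ?_)
    rw [smul_smul]
    congr 1
    rw [mul_assoc, ← Real.exp_add]
    have : (α - ρ) * hcomp α s + ρ * hcomp α s = Real.log ((1 + s) / (1 - s)) := by
      unfold hcomp; field_simp; ring
    rw [this, Real.exp_log (div_pos ha hb)]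
    field_simp
    ring
  have hnh : Set.Ioo (-1 : ℝ) 1 ∈ 𝓝[<] (1 : ℝ) := Ioo_mem_nhdsLT (by norm_num)
  obtain ⟨c, hc⟩ : ∃ c, Tendsto (fun τ => Real.exp ((α - ρ) * τ)) atTop (𝓝 c) := by
    rcases hρ.eq_or_lt with h | h
    · exact ⟨1, by simp [h]⟩
    · exact ⟨0, Real.tendsto_exp_atBot.comp
        (tendsto_id.const_mul_atTop_of_neg (by linarith))⟩
  have hq : Tendsto (fun s : ℝ => 2 / α / (1 + s) ^ 2) (𝓝[<] 1) (𝓝 (2 / α / (1 + 1) ^ 2)) := by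
    have : ContinuousAt (fun s : ℝ => 2 / α / (1 + s) ^ 2) 1 := by
      apply ContinuousAt.div <;> first | fun_prop | norm_num
    exact this.tendsto.mono_left nhdsWithin_le_nhds
  have hlim := (hq.mul (hc.comp hh)).smul (hL.comp hh)
  refine ⟨_, (hasDerivWithinAt_Iic_of_tendsto_deriv (s := Set.Ioo (-1) 1)
    (fun s hs => (hder s hs).differentiableAt.differentiableWithinAt) ?_ hnh
    (hlim.congr' ?_)).mono Set.Icc_subset_Iic_self⟩
  · have : Tendsto (compInput Λ lp lm α) (𝓝[<] 1) (𝓝 lp) := by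
      refine (hp.comp hh).congr' ?_
      filter_upwards [hnh] with t ht
      simp [compInput, ht.1.ne', ht.2.ne]
    have h1 : compInput Λ lp lm α 1 = lp := by simp [compInput]
    unfold ContinuousWithinAt
    rw [h1]
    exact this.mono_left (nhdsWithin_mono _ Set.Ioo_subset_Iio_self)
  · filter_upwards [hnh] with s hs
    exact (hder s hs).deriv.symm

theorem aux_symm {d : ℕ} (Λ : ℝ → Fin d → ℝ) (lp lm : Fin d → ℝ) (α s : ℝ) :
    compInput (fun τ => Λ (-τ)) lm lp α (-s) = compInput Λ lp lm α s := by
  have h : hcomp α (-s) = - hcomp α s := by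
    unfold hcomp
    rw [← mul_neg, ← Real.log_inv, inv_div]
    simp [sub_eq_add_neg]
  unfold compInput
  rw [h]
  by_cases h1 : s = 1
  · subst h1; norm_num
  by_cases h2 : s = -1
  · subst h2; norm_num
  have h3 : ¬ (-s = 1) := fun h => h2 (by linarith)
  have h4 : ¬ (-s = -1) := fun h => h1 (by linarith)
  simp only [h1, h2, h3, h4, if_false, neg_neg]

theorem aux_input' {d : ℕ} (Λ : ℝ → Fin d → ℝ) (ρ : ℝ) (hΛ : Differentiable ℝ Λ)
    (Lm : Fin d → ℝ) (hL : Tendsto (fun τ => Real.exp (-ρ * τ) • deriv Λ τ) atBot (𝓝 Lm))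
    (lp lm : Fin d → ℝ) (hm : Tendsto Λ atBot (𝓝 lm)) (α : ℝ) (hα : α ∈ Set.Ioc 0 ρ) :
    ∃ v, HasDerivWithinAt (compInput Λ lp lm α) v (Set.Icc (-1) 1) (-1) := by
  obtain ⟨v, hv⟩ := aux_input (fun τ => Λ (-τ)) ρ (hΛ.comp differentiable_neg) (-Lm) (by
    have := (hL.comp tendsto_neg_atTop_atBot).neg
    refine this.congr fun τ => ?_
    simp [deriv_comp_neg]) lm lp (hm.comp tendsto_neg_atTop_atBot) α hα
  have hv' : HasDerivWithinAt (compInput (fun τ => Λ (-τ)) lm lp α) v (Set.Icc (-1) 1)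
    (-(-1)) := by simpa using hv
  have := HasDerivWithinAt.scomp (-1 : ℝ) hv' ((hasDerivAt_neg (-1 : ℝ)).hasDerivWithinAt
    (s := Set.Icc (-1) 1)) (fun s hs => ⟨by linarith [hs.2], by linarith [hs.1]⟩)
  refine ⟨_, this.congr (fun s _ => (aux_symm Λ lp lm α s).symm) (aux_symm Λ lp lm α _).symm⟩

open Polynomial in
theorem aux_charpoly {n : ℕ} (A : (Fin n → ℝ) →L[ℝ] (Fin n → ℝ)) (b : Fin n → ℝ) (c : ℝ) :
    ((A.comp (ContinuousLinearMap.fst ℝ (Fin n → ℝ) ℝ) +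
      (ContinuousLinearMap.snd ℝ (Fin n → ℝ) ℝ).smulRight b).prod
      (c • ContinuousLinearMap.snd ℝ (Fin n → ℝ) ℝ)).toLinearMap.charpoly =
      A.toLinearMap.charpoly * (X - C c) := by
  let b1 := Pi.basisFun ℝ (Fin n)
  let b2 := Module.Basis.singleton Unit ℝ
  rw [← LinearMap.charpoly_toMatrix _ (b1.prod b2), ← LinearMap.charpoly_toMatrix A.toLinearMap b1]
  have : LinearMap.toMatrix (b1.prod b2) (b1.prod b2)
    ((A.comp (ContinuousLinearMap.fst ℝ (Fin n → ℝ) ℝ) +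
      (ContinuousLinearMap.snd ℝ (Fin n → ℝ) ℝ).smulRight b).prod
      (c • ContinuousLinearMap.snd ℝ (Fin n → ℝ) ℝ)).toLinearMap =
      Matrix.fromBlocks (LinearMap.toMatrix b1 b1 A.toLinearMap) (Matrix.of fun i _ => b i) 0
        (Matrix.of fun _ _ => c) := by
    ext i j
    rcases i with i | i <;> rcases j with j | j <;>
      simp [LinearMap.toMatrix_apply, b1, b2]
  rw [this, Matrix.charpoly_fromBlocks_zero₂₁]
  congr 1
  simp [Matrix.charpoly, Matrix.charmatrix]

open Polynomial in
theorem aux_main {n d : ℕ} (f : (Fin n → ℝ) × (Fin d → ℝ) → Fin n → ℝ)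
    (hf : Differentiable ℝ f) (Λ : ℝ → Fin d → ℝ) (lp lm : Fin d → ℝ) (r α : ℝ)
    (x₀ : Fin n → ℝ) (s : ℝ) (l v : Fin d → ℝ) (hl : compInput Λ lp lm α s = l)
    (hv : HasDerivWithinAt (compInput Λ lp lm α) v (Set.Icc (-1) 1) s) :
    ∃ L : ((Fin n → ℝ) × ℝ) →L[ℝ] ((Fin n → ℝ) × ℝ),
        HasFDerivWithinAt (compField f Λ lp lm r α) L (compDomain n) (x₀, s) ∧
        L.toLinearMap.charpoly =
          ((1 / r) • fderiv ℝ (fun x => f (x, l)) x₀).toLinearMap.charpoly *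
            (X - C (-α * s)) := by
  refine ⟨_, ?_, aux_charpoly _ ((1 / r) • fderiv ℝ f (x₀, l) (0, v)) _⟩
  have hsnd : HasFDerivWithinAt (Prod.snd : (Fin n → ℝ) × ℝ → ℝ)
    (ContinuousLinearMap.snd ℝ (Fin n → ℝ) ℝ) (compDomain n) (x₀, s) := hasFDerivWithinAt_snd
  have hfst : HasFDerivWithinAt (Prod.fst : (Fin n → ℝ) × ℝ → _)
    (ContinuousLinearMap.fst ℝ (Fin n → ℝ) ℝ) (compDomain n) (x₀, s) := hasFDerivWithinAt_fst
  have h1 : HasFDerivWithinAt (fun p : (Fin n → ℝ) × ℝ => compInput Λ lp lm α p.2) _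
      (compDomain n) (x₀, s) :=
    HasFDerivWithinAt.comp (x₀, s) (f := Prod.snd) hv.hasFDerivWithinAt hsnd
      (fun p hp => hp.2)
  have h2 := hfst.prodMk h1
  have h3 : HasFDerivWithinAt (fun p : (Fin n → ℝ) × ℝ => f (p.1, compInput Λ lp lm α p.2)) _
      (compDomain n) (x₀, s) :=
    HasFDerivAt.comp_hasFDerivWithinAt (x₀, s) (hf _).hasFDerivAt h2
  have h4 := h3.const_smul r⁻¹
  have hd : HasDerivAt (fun t : ℝ => α * (1 - t ^ 2) / 2) (-α * s) s := by
    have := ((((hasDerivAt_id s).pow 2).const_sub 1).const_mul α).div_const 2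
    refine this.congr_deriv ?_
    simp; ring
  have h5 : HasFDerivWithinAt (fun p : (Fin n → ℝ) × ℝ => α * (1 - p.2 ^ 2) / 2) _
      (compDomain n) (x₀, s) :=
    HasFDerivAt.comp_hasFDerivWithinAt (x₀, s) (f := Prod.snd) hd.hasFDerivAt hsnd
  have hfx : fderiv ℝ (fun x => f (x, l)) x₀ =
      (fderiv ℝ f (x₀, l)).comp (ContinuousLinearMap.inl ℝ _ _) :=
    (HasFDerivAt.comp x₀ (hf (x₀, l)).hasFDerivAt (hasFDerivAt_prodMk_left x₀ l)).fderiv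
  refine (h4.prodMk h5).congr_fderiv ?_
  simp only [hl, hfx]
  apply ContinuousLinearMap.ext
  rintro ⟨x, t⟩
  have key : fderiv ℝ f (x₀, l) (x, t • v) =
      fderiv ℝ f (x₀, l) (x, 0) + t • fderiv ℝ f (x₀, l) (0, v) := by
    rw [← map_smul, ← map_add]; simp
  ext i
  · simp [key]; ring
  · simp; ring

open Polynomial in
/-- For `r > 0` and `α ∈ (0,ρ]`, the characteristic polynomial of the Fréchet
derivative of `F_{r,α}` within `ℝⁿ × [-1,1]` at `(x₀,1)` equals the characteristic polynomial
of `(1/r)·D_x f(x₀, λ⁺)` times `(X + α)`, and at `(x₀,-1)` it equals the characteristic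
polynomial of `(1/r)·D_x f(x₀, λ⁻)` times `(X - α)`. -/
theorem stmt7 {n d : ℕ} (f : (Fin n → ℝ) × (Fin d → ℝ) → Fin n → ℝ)
    (hf : ContDiff ℝ 1 f)
    (Λ : ℝ → Fin d → ℝ) (ρ : ℝ) (hρ : 0 < ρ)
    (hΛ : ContDiff ℝ 1 Λ) (hbac : ExpBiAsympConst Λ ρ)
    (lp lm : Fin d → ℝ)
    (hp : Tendsto Λ atTop (𝓝 lp)) (hm : Tendsto Λ atBot (𝓝 lm))
    (r α : ℝ) (hr : 0 < r) (hα : α ∈ Set.Ioc 0 ρ) :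
    ∀ x₀ : Fin n → ℝ,
      (∃ L : ((Fin n → ℝ) × ℝ) →L[ℝ] ((Fin n → ℝ) × ℝ),
        HasFDerivWithinAt (compField f Λ lp lm r α) L (compDomain n) (x₀, 1) ∧
        L.toLinearMap.charpoly =
          ((1 / r) • fderiv ℝ (fun x => f (x, lp)) x₀).toLinearMap.charpoly *
            (X + C α)) ∧
      (∃ L : ((Fin n → ℝ) × ℝ) →L[ℝ] ((Fin n → ℝ) × ℝ),
        HasFDerivWithinAt (compField f Λ lp lm r α) L (compDomain n) (x₀, -1) ∧
        L.toLinearMap.charpoly =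
          ((1 / r) • fderiv ℝ (fun x => f (x, lm)) x₀).toLinearMap.charpoly *
            (X - C α)) := by
  intro x₀
  obtain ⟨⟨Lp, hLp⟩, ⟨Lm, hLm⟩⟩ := hbac
  have hΛd : Differentiable ℝ Λ := hΛ.differentiable (by norm_num)
  have hfd : Differentiable ℝ f := hf.differentiable (by norm_num)
  obtain ⟨v, hv⟩ := aux_input Λ ρ hΛd Lp hLp lp lm hp α hα
  obtain ⟨w, hw⟩ := aux_input' Λ ρ hΛd Lm hLm lp lm hm α hα
  have h1 := aux_main f hfd Λ lp lm r α x₀ 1 lp v (by simp [compInput]) hv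
  have h2 := aux_main f hfd Λ lp lm r α x₀ (-1) lm w (by norm_num [compInput]) hw
  refine ⟨?_, ?_⟩
  · simpa using h1
  · simpa using h2
end
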